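/- arXiv:2605.19691 — 7 statements merged into one kernel-verified Lean document; each statement's English description precedes it below -/
import Mathlib

section
/- Let K be a field and let B₁,…,B_k ∈ K^{m×n} be a linearly independent family of matrices generating a column-nondegenerate matrix rank-metric code C = span_K{B₁,…,B_k}. Then for every u ∈ K^k, the rank of the codeword m₁(T,u) = Σᵢ uᵢBᵢ satisfies rank(m₁(T,u)) = n − dim_K S_c(u^⊥), where S is the associated column-system and u^⊥ = {v ∈ K^k : Σᵢ uᵢvᵢ = 0}. -/
open Matrix

section Defs

variable {K : Type*} [Field K]

/-- The row space of a matrix: the span of its rows in `K^b`. -/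
noncomputable def rowSpace {a b : ℕ} (M : Matrix (Fin a) (Fin b) K) :
    Submodule K (Fin b → K) :=
  Submodule.span K (Set.range fun i => M i)

/-- The column space of a matrix: the span of its columns in `K^a`. -/
noncomputable def colSpace {a b : ℕ} (M : Matrix (Fin a) (Fin b) K) :
    Submodule K (Fin a → K) :=
  Submodule.span K (Set.range fun j i => M i j)

/-- `Sc S U = {X ∈ S : colsp(X) ⊆ U}`, a subspace of the matrix space. -/
noncomputable def Sc {a b : ℕ} (S : Submodule K (Matrix (Fin a) (Fin b) K))
    (U : Submodule K (Fin a → K)) : Submodule K (Matrix (Fin a) (Fin b) K) where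
  carrier := {X | X ∈ S ∧ colSpace X ≤ U}
  add_mem' := by
    rintro X Y ⟨hXS, hXU⟩ ⟨hYS, hYU⟩
    refine ⟨S.add_mem hXS hYS, ?_⟩
    rw [colSpace, Submodule.span_le]
    rintro v ⟨j, rfl⟩
    have hx : (fun i => X i j) ∈ U := hXU (Submodule.subset_span ⟨j, rfl⟩)
    have hy : (fun i => Y i j) ∈ U := hYU (Submodule.subset_span ⟨j, rfl⟩)
    exact U.add_mem hx hy
  zero_mem' := by
    refine ⟨S.zero_mem, ?_⟩
    rw [colSpace, Submodule.span_le]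
    rintro v ⟨j, rfl⟩
    exact U.zero_mem
  smul_mem' := by
    rintro c X ⟨hXS, hXU⟩
    refine ⟨S.smul_mem c hXS, ?_⟩
    rw [colSpace, Submodule.span_le]
    rintro v ⟨j, rfl⟩
    exact U.smul_mem c (hXU (Submodule.subset_span ⟨j, rfl⟩))

/-- `Sr S U = {X ∈ S : rowsp(X) ⊆ U}`, a subspace of the matrix space. -/
noncomputable def Sr {a b : ℕ} (S : Submodule K (Matrix (Fin a) (Fin b) K))
    (U : Submodule K (Fin b → K)) : Submodule K (Matrix (Fin a) (Fin b) K) where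
  carrier := {X | X ∈ S ∧ rowSpace X ≤ U}
  add_mem' := by
    rintro X Y ⟨hXS, hXU⟩ ⟨hYS, hYU⟩
    refine ⟨S.add_mem hXS hYS, ?_⟩
    rw [rowSpace, Submodule.span_le]
    rintro v ⟨i, rfl⟩
    have hx : X i ∈ U := hXU (Submodule.subset_span ⟨i, rfl⟩)
    have hy : Y i ∈ U := hYU (Submodule.subset_span ⟨i, rfl⟩)
    exact U.add_mem hx hy
  zero_mem' := by
    refine ⟨S.zero_mem, ?_⟩
    rw [rowSpace, Submodule.span_le]
    rintro v ⟨i, rfl⟩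
    exact U.zero_mem
  smul_mem' := by
    rintro c X ⟨hXS, hXU⟩
    refine ⟨S.smul_mem c hXS, ?_⟩
    rw [rowSpace, Submodule.span_le]
    rintro v ⟨i, rfl⟩
    exact U.smul_mem c (hXU (Submodule.subset_span ⟨i, rfl⟩))

/-- Row support of a set of matrices: the sum of the row spaces of its elements. -/
noncomputable def rowSupport {a b : ℕ} (D : Submodule K (Matrix (Fin a) (Fin b) K)) :
    Submodule K (Fin b → K) :=
  ⨆ M ∈ D, rowSpace M

/-- Column support of a set of matrices: the sum of the column spaces of its elements. -/
noncomputable def colSupport {a b : ℕ} (D : Submodule K (Matrix (Fin a) (Fin b) K)) :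
    Submodule K (Fin a → K) :=
  ⨆ M ∈ D, colSpace M

/-- The hyperplane `u^⊥ = {v : ∑ i, u i * v i = 0}`. -/
noncomputable def perp {a : ℕ} (u : Fin a → K) : Submodule K (Fin a → K) where
  carrier := {v | ∑ i, u i * v i = 0}
  add_mem' := by
    intro v w hv hw
    simp only [Set.mem_setOf_eq, Pi.add_apply, mul_add, Finset.sum_add_distrib] at *
    simp [hv, hw]
  zero_mem' := by simp
  smul_mem' := by
    intro c v hv
    simp only [Set.mem_setOf_eq, Pi.smul_apply, smul_eq_mul] at *
    have : ∑ i, u i * (c * v i) = c * ∑ i, u i * v i := by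
      rw [Finset.mul_sum]; congr 1; ext i; ring
    simp [this, hv]

/-- The orthogonal complement `U^⊥ = {v : ∀ u ∈ U, ∑ i, u i * v i = 0}`. -/
noncomputable def perpSub {a : ℕ} (U : Submodule K (Fin a → K)) : Submodule K (Fin a → K) :=
  ⨅ u ∈ U, perp u

/-- The slices of the column-system: `(X l) i j = (B i) j l`. -/
def colSlices {m n k : ℕ} (B : Fin k → Matrix (Fin m) (Fin n) K) :
    Fin n → Matrix (Fin k) (Fin m) K :=
  fun l => Matrix.of fun i j => B i j l

/-- The slices of the row-system: `(Y j) l i = (B i) j l`. -/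
def rowSlices {m n k : ℕ} (B : Fin k → Matrix (Fin m) (Fin n) K) :
    Fin m → Matrix (Fin n) (Fin k) K :=
  fun j => Matrix.of fun l i => B i j l

/-- The linear map `u ↦ ∑ i, u i • B i` (i.e. `u ↦ m₁(T,u)`). -/
noncomputable def combMap {m n k : ℕ} (B : Fin k → Matrix (Fin m) (Fin n) K) :
    (Fin k → K) →ₗ[K] Matrix (Fin m) (Fin n) K where
  toFun u := ∑ i, u i • B i
  map_add' := by intro u v; simp [add_smul, Finset.sum_add_distrib]
  map_smul' := by intro c u; simp [smul_smul, Finset.smul_sum]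

/-- The `t`-th row-generalized rank weight. -/
noncomputable def dRow {a b : ℕ} (C : Submodule K (Matrix (Fin a) (Fin b) K)) (t : ℕ) : ℕ :=
  sInf {r | ∃ D : Submodule K (Matrix (Fin a) (Fin b) K),
    D ≤ C ∧ Module.finrank K D = t ∧ Module.finrank K (rowSupport D) = r}

/-- The `t`-th column-generalized rank weight. -/
noncomputable def dCol {a b : ℕ} (C : Submodule K (Matrix (Fin a) (Fin b) K)) (t : ℕ) : ℕ :=
  sInf {r | ∃ D : Submodule K (Matrix (Fin a) (Fin b) K),
    D ≤ C ∧ Module.finrank K D = t ∧ Module.finrank K (colSupport D) = r}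

end Defs

/-- A vector killed by every generator of a column-nondegenerate code is zero. -/
theorem eq_zero_of_forall_mulVec_eq_zero {K : Type*} [Field K] {m n k : ℕ}
    {B : Fin k → Matrix (Fin m) (Fin n) K}
    (hnd : rowSupport (Submodule.span K (Set.range B)) = ⊤)
    {c : Fin n → K} (hc : ∀ i, B i *ᵥ c = 0) : c = 0 := by
  have hspan : ∀ M ∈ Submodule.span K (Set.range B), M *ᵥ c = 0 := by
    intro M hM
    induction hM using Submodule.span_induction with
    | mem x hx => obtain ⟨i, rfl⟩ := hx; exact hc i
    | zero => simp
    | add x y _ _ hx hy => rw [Matrix.add_mulVec, hx, hy, add_zero]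
    | smul a x _ hx => rw [Matrix.smul_mulVec, hx, smul_zero]
  have hle : rowSupport (Submodule.span K (Set.range B)) ≤ perp c := by
    refine iSup₂_le fun M hM => Submodule.span_le.2 ?_
    rintro _ ⟨j, rfl⟩
    have h := congrFun (hspan M hM) j
    change c ⬝ᵥ M j = 0
    rw [dotProduct_comm]
    exact h
  rw [hnd] at hle
  ext l
  have h : c ⬝ᵥ Pi.single l 1 = 0 := hle (Submodule.mem_top (x := Pi.single l 1))
  simpa using h

theorem linearCombination_colSlices_apply {K : Type*} [Field K] {m n k : ℕ}
    (B : Fin k → Matrix (Fin m) (Fin n) K) (c : Fin n → K) (i : Fin k) (j : Fin m) :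
    Fintype.linearCombination K (colSlices B) c i j = (B i *ᵥ c) j := by
  simp [Fintype.linearCombination_apply, Matrix.sum_apply, colSlices, mulVec, dotProduct,
    mul_comm]

theorem linearCombination_colSlices_injective {K : Type*} [Field K] {m n k : ℕ}
    {B : Fin k → Matrix (Fin m) (Fin n) K}
    (hnd : rowSupport (Submodule.span K (Set.range B)) = ⊤) :
    Function.Injective (Fintype.linearCombination K (colSlices B)) := by
  refine (injective_iff_map_eq_zero _).2 fun c hc =>
    eq_zero_of_forall_mulVec_eq_zero hnd fun i => ?_
  ext j
  rw [← linearCombination_colSlices_apply, hc]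
  rfl

theorem colSpace_linearCombination_colSlices_le_perp_iff {K : Type*} [Field K] {m n k : ℕ}
    (B : Fin k → Matrix (Fin m) (Fin n) K) (c : Fin n → K) (u : Fin k → K) :
    colSpace (Fintype.linearCombination K (colSlices B) c) ≤ perp u ↔
      (∑ i, u i • B i) *ᵥ c = 0 := by
  rw [colSpace, Submodule.span_le, Set.range_subset_iff, funext_iff]
  refine forall_congr' fun j => ?_
  change ∑ i, u i * Fintype.linearCombination K (colSlices B) c i j = 0 ↔ _
  simp [linearCombination_colSlices_apply, Matrix.sum_mulVec, Matrix.smul_mulVec]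

theorem Sc_span_colSlices_perp {K : Type*} [Field K] {m n k : ℕ}
    (B : Fin k → Matrix (Fin m) (Fin n) K) (u : Fin k → K) :
    Sc (Submodule.span K (Set.range (colSlices B))) (perp u) =
      (LinearMap.ker (∑ i, u i • B i).mulVecLin).map
        (Fintype.linearCombination K (colSlices B)) := by
  ext X
  change X ∈ Submodule.span K (Set.range (colSlices B)) ∧ colSpace X ≤ perp u ↔ _
  rw [← Fintype.range_linearCombination, Submodule.mem_map]
  constructor
  · rintro ⟨⟨c, rfl⟩, h⟩
    exact ⟨c, (colSpace_linearCombination_colSlices_le_perp_iff B c u).1 h, rfl⟩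
  · rintro ⟨c, h, rfl⟩
    exact ⟨⟨c, rfl⟩, (colSpace_linearCombination_colSlices_le_perp_iff B c u).2 h⟩

/-- For a column-nondegenerate matrix rank-metric code `C = span{B₁,…,B_k}`
with associated column-system `S`, the rank of the codeword `m₁(T,u) = ∑ i, uᵢ Bᵢ` equals
`n − dim S_c(u^⊥)`. -/
theorem stmt0 {K : Type*} [Field K] {m n k : ℕ}
    (hm : 0 < m) (hn : 0 < n) (hk : 0 < k)
    (B : Fin k → Matrix (Fin m) (Fin n) K) (hB : LinearIndependent K B)
    (C : Submodule K (Matrix (Fin m) (Fin n) K))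
    (hC : C = Submodule.span K (Set.range B))
    (hnd : rowSupport C = ⊤)
    (S : Submodule K (Matrix (Fin k) (Fin m) K))
    (hS : S = Submodule.span K (Set.range (colSlices B)))
    (u : Fin k → K) :
    (∑ i, u i • B i).rank = n - Module.finrank K (Sc S (perp u)) := by
  subst hC hS
  rw [Sc_span_colSlices_perp, ← LinearEquiv.finrank_eq (Submodule.equivMapOfInjective _
    (linearCombination_colSlices_injective hnd) _)]
  have h := LinearMap.finrank_range_add_finrank_ker (∑ i, u i • B i).mulVecLin
  rw [Module.finrank_fin_fun] at h
  rw [Matrix.rank]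
  omega
end

section
/- Let K be a field and let B₁,…,B_k ∈ K^{m×n} be a linearly independent family of matrices generating a column-nondegenerate matrix rank-metric code C = span_K{B₁,…,B_k}, with associated column-system S. For every subspace U ⊆ K^k, let D_U := {Σᵢ uᵢBᵢ : u ∈ U} ⊆ C. Then dim_K S_c(U^⊥) = n − dim_K(Σ_{M∈D_U} rowsp(M)), where U^⊥ = {v ∈ K^k : Σᵢ uᵢvᵢ = 0 for all u ∈ U}. -/
open Matrix

theorem mem_perpSub {K : Type*} [Field K] {a : ℕ} {U : Submodule K (Fin a → K)}
    {v : Fin a → K} : v ∈ perpSub U ↔ ∀ u ∈ U, u ⬝ᵥ v = 0 := by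
  simp only [perpSub, Submodule.mem_iInf]
  rfl

theorem finrank_perpSub {K : Type*} [Field K] {a : ℕ} (U : Submodule K (Fin a → K)) :
    Module.finrank K (perpSub U) = a - Module.finrank K U := by
  have h : perpSub U = U.dualAnnihilator.comap
      (dotProductEquiv K (Fin a) : (Fin a → K) →ₗ[K] Module.Dual K (Fin a → K)) := by
    ext v
    simp [mem_perpSub, Submodule.mem_dualAnnihilator, dotProduct_comm v]
  have h₁ : Module.finrank K (perpSub U) = Module.finrank K U.dualAnnihilator := by
    rw [h]
    exact ((dotProductEquiv K (Fin a)).ofSubmodule' U.dualAnnihilator).finrank_eq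
  have h₂ := Subspace.finrank_add_finrank_dualAnnihilator_eq U
  rw [Module.finrank_fin_fun] at h₂
  omega

theorem le_perpSub_comm {K : Type*} [Field K] {a : ℕ} {U V : Submodule K (Fin a → K)} :
    U ≤ perpSub V ↔ V ≤ perpSub U := by
  constructor <;> intro h x hx <;> rw [mem_perpSub] <;> intro y hy <;>
    rw [dotProduct_comm] <;> exact mem_perpSub.1 (h hy) x hx

theorem mem_perpSub_rowSupport {K : Type*} [Field K] {a b : ℕ}
    {D : Submodule K (Matrix (Fin a) (Fin b) K)} {c : Fin b → K} :
    c ∈ perpSub (rowSupport D) ↔ ∀ M ∈ D, M *ᵥ c = 0 := by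
  rw [← Submodule.span_singleton_le_iff_mem, le_perpSub_comm]
  simp only [rowSupport, iSup_le_iff, rowSpace, Submodule.span_le, Set.range_subset_iff,
    SetLike.mem_coe]
  refine forall₂_congr fun M _ => ?_
  rw [funext_iff]
  refine forall_congr' fun i => ?_
  rw [← Submodule.span_singleton_le_iff_mem, le_perpSub_comm,
    Submodule.span_singleton_le_iff_mem, mem_perpSub]
  refine ⟨fun h => h _ (Submodule.mem_span_singleton_self _), fun h u hu => ?_⟩
  obtain ⟨r, rfl⟩ := Submodule.mem_span_singleton.1 hu
  rw [smul_dotProduct, show M i ⬝ᵥ c = 0 from h, smul_zero]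

theorem colSpace_le_perpSub {K : Type*} [Field K] {a b : ℕ}
    {X : Matrix (Fin a) (Fin b) K} {U : Submodule K (Fin a → K)} :
    colSpace X ≤ perpSub U ↔ ∀ u ∈ U, u ᵥ* X = 0 := by
  simp only [colSpace, Submodule.span_le, Set.range_subset_iff, SetLike.mem_coe, mem_perpSub,
    funext_iff]
  exact ⟨fun h u hu j => h j u hu, fun h j u hu => h u hu j⟩

theorem sum_smul_colSlices_apply {K : Type*} [Field K] {m n k : ℕ}
    (B : Fin k → Matrix (Fin m) (Fin n) K) (c : Fin n → K) (i : Fin k) :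
    (∑ l, c l • colSlices B l) i = B i *ᵥ c := by
  ext j
  simp [Matrix.sum_apply, colSlices, mulVec, dotProduct, mul_comm]

theorem vecMul_sum_smul_colSlices {K : Type*} [Field K] {m n k : ℕ}
    (B : Fin k → Matrix (Fin m) (Fin n) K) (c : Fin n → K) (u : Fin k → K) :
    u ᵥ* (∑ l, c l • colSlices B l) = combMap B u *ᵥ c := by
  rw [vecMul_eq_sum]
  simp [combMap, sum_smul_colSlices_apply, Matrix.sum_mulVec, smul_mulVec]

/-- Column-nondegeneracy makes the slices of the column-system linearly independent. -/
theorem linearIndependent_colSlices {K : Type*} [Field K] {m n k : ℕ}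
    {B : Fin k → Matrix (Fin m) (Fin n) K}
    (h : rowSupport (Submodule.span K (Set.range B)) = ⊤) :
    LinearIndependent K (colSlices B) := by
  rw [Fintype.linearIndependent_iff]
  intro c hc
  have hB : ∀ M ∈ Submodule.span K (Set.range B), M *ᵥ c = 0 := by
    intro M hM
    induction hM using Submodule.span_induction with
    | mem M hM =>
      obtain ⟨i, rfl⟩ := hM
      rw [← sum_smul_colSlices_apply, hc]
      rfl
    | zero => exact zero_mulVec c
    | add M N _ _ hM hN => rw [add_mulVec, hM, hN, add_zero]
    | smul r M _ hM => rw [smul_mulVec, hM, smul_zero]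
  rw [← mem_perpSub_rowSupport, h, mem_perpSub] at hB
  intro l
  simpa using hB (Pi.single l 1) trivial

theorem Sc_span_colSlices {K : Type*} [Field K] {m n k : ℕ}
    (B : Fin k → Matrix (Fin m) (Fin n) K) (U : Submodule K (Fin k → K)) :
    Sc (Submodule.span K (Set.range (colSlices B))) (perpSub U) =
      (perpSub (rowSupport (U.map (combMap B)))).map
        (Fintype.linearCombination K (colSlices B)) := by
  have key (c : Fin n → K) : colSpace (∑ l, c l • colSlices B l) ≤ perpSub U ↔
      c ∈ perpSub (rowSupport (U.map (combMap B))) := by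
    simp [colSpace_le_perpSub, mem_perpSub_rowSupport, vecMul_sum_smul_colSlices]
  ext X
  change X ∈ Submodule.span K _ ∧ colSpace X ≤ perpSub U ↔ _
  simp only [Submodule.mem_span_range_iff_exists_fun, Submodule.mem_map,
    Fintype.linearCombination_apply, ← key]
  constructor
  · rintro ⟨⟨c, rfl⟩, h⟩
    exact ⟨c, h, rfl⟩
  · rintro ⟨c, h, rfl⟩
    exact ⟨⟨c, rfl⟩, h⟩

/-- For a column-nondegenerate code `C = span{B₁,…,B_k}` with associated
column-system `S`, and any subspace `U ⊆ K^k`, with `D_U = {∑ i, uᵢ Bᵢ : u ∈ U}`,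
one has `dim S_c(U^⊥) = n − dim (Σ_{M ∈ D_U} rowsp(M))`. -/
theorem stmt1 {K : Type*} [Field K] {m n k : ℕ}
    (hm : 0 < m) (hn : 0 < n) (hk : 0 < k)
    (B : Fin k → Matrix (Fin m) (Fin n) K) (hB : LinearIndependent K B)
    (C : Submodule K (Matrix (Fin m) (Fin n) K))
    (hC : C = Submodule.span K (Set.range B))
    (hnd : rowSupport C = ⊤)
    (S : Submodule K (Matrix (Fin k) (Fin m) K))
    (hS : S = Submodule.span K (Set.range (colSlices B)))
    (U : Submodule K (Fin k → K)) :
    Module.finrank K (Sc S (perpSub U))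
      = n - Module.finrank K (rowSupport (Submodule.map (combMap B) U)) := by
  subst hC hS
  have hinj :=
    linearIndependent_iff_injective_fintypeLinearCombination.1 (linearIndependent_colSlices hnd)
  rw [Sc_span_colSlices,
    ← (Submodule.equivMapOfInjective _ hinj _).finrank_eq, finrank_perpSub]
end

section
/- (Singleton bound for matrix rank-metric codes.) Let K be a field and let C ⊆ K^{m×n} be a nonzero K-subspace of matrices with dim_K C = k, and let d := min{rank(M) : M ∈ C, M ≠ 0} be its minimum rank distance. Then k ≤ max{m,n}·(min{m,n} − d + 1). -/
open Matrix

/-- If every nonzero matrix of `C` has rank exceeding the number of rows outside `s`, then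
restriction to the rows in `s` is injective on `C`, which bounds the dimension of `C`. -/
theorem finrank_le_card_mul_card_of_card_compl_lt_rank {K ι κ : Type*} [Field K]
    [Fintype ι] [DecidableEq ι] [Fintype κ] (C : Submodule K (Matrix ι κ K)) (s : Finset ι)
    (h : ∀ M ∈ C, M ≠ 0 → sᶜ.card < M.rank) :
    Module.finrank K C ≤ s.card * Fintype.card κ := by
  let restrictRows : Matrix ι κ K →ₗ[K] Matrix s κ K :=
    { toFun := fun M => M.submatrix Subtype.val id
      map_add' := fun _ _ => rfl
      map_smul' := fun _ _ => rfl }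
  have hinj : Function.Injective (restrictRows.domRestrict C) := by
    rw [injective_iff_map_eq_zero]
    rintro ⟨M, hM⟩ hM0
    by_contra hne
    refine (h M hM fun h0 => hne (Subtype.ext h0)).not_ge
      (M.rank_le_card_of_support_subset sᶜ ?_)
    intro i hi
    rw [Finset.mem_coe, Finset.mem_compl]
    exact fun his => hi (congrFun hM0 ⟨i, his⟩)
  calc Module.finrank K C ≤ Module.finrank K (Matrix s κ K) :=
        LinearMap.finrank_le_finrank_of_injective hinj
    _ = s.card * Fintype.card κ := by simp [Module.finrank_matrix]

/-- The Singleton bound obtained by deleting all but `m - d + 1` rows. -/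
theorem finrank_le_mul_of_forall_le_rank {K : Type*} [Field K] {m n d : ℕ}
    (C : Submodule K (Matrix (Fin m) (Fin n) K)) (hd : 0 < d) (hdm : d ≤ m)
    (h : ∀ M ∈ C, M ≠ 0 → d ≤ M.rank) :
    Module.finrank K C ≤ n * (m - d + 1) := by
  obtain ⟨s, -, hs⟩ := Finset.exists_subset_card_eq
    (s := (Finset.univ : Finset (Fin m))) (n := m - d + 1)
    (by rw [Finset.card_univ, Fintype.card_fin]; omega)
  have hle := finrank_le_card_mul_card_of_card_compl_lt_rank C s fun M hM hne => by
    have hMd := h M hM hne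
    rw [Finset.card_compl, Fintype.card_fin, hs]
    omega
  rwa [hs, Fintype.card_fin, mul_comm] at hle

/-- Singleton bound for matrix rank-metric codes:
`k ≤ max{m,n}·(min{m,n} − d + 1)` where `d` is the minimum rank of a nonzero codeword. -/
theorem stmt4 {K : Type*} [Field K] {m n k d : ℕ}
    (hm : 0 < m) (hn : 0 < n) (hk : 0 < k)
    (C : Submodule K (Matrix (Fin m) (Fin n) K))
    (hC : Module.finrank K C = k)
    (hd : IsLeast {r | ∃ M ∈ C, M ≠ 0 ∧ M.rank = r} d) :
    k ≤ max m n * (min m n - d + 1) := by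
  subst hC
  obtain ⟨⟨M₀, hM₀, hne₀, rfl⟩, hmin⟩ := hd
  have hpos : 0 < M₀.rank := by
    refine Nat.pos_of_ne_zero fun h => hne₀ (Matrix.ext_of_mulVec_single fun j => ?_)
    rw [Matrix.zero_mulVec]
    exact LinearMap.congr_fun (LinearMap.range_eq_bot.mp (Submodule.finrank_eq_zero.mp h)) _
  have hle : ∀ M ∈ C, M ≠ 0 → M₀.rank ≤ M.rank := fun M hM hne => hmin ⟨M, hM, hne, rfl⟩
  rcases le_total m n with hmn | hnm
  · rw [max_eq_right hmn, min_eq_left hmn]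
    exact finrank_le_mul_of_forall_le_rank C hpos M₀.rank_le_height hle
  · rw [max_eq_left hnm, min_eq_right hnm]
    let e := Matrix.transposeLinearEquiv (Fin m) (Fin n) K K
    rw [← LinearEquiv.finrank_map_eq e C]
    refine finrank_le_mul_of_forall_le_rank _ hpos M₀.rank_le_width ?_
    rintro _ ⟨M, hM, rfl⟩ hne
    exact (hle M hM fun h => hne (by simp [h])).trans_eq M.rank_transpose.symm
end

section
/- Let K be a field and let C ⊆ K^{m×n} be a K-subspace with dim_K C = k. For every t ∈ {1,…,k}, the generalized rank weights satisfy d_t^r(C) ≤ n − ⌊(k−t)/m⌋ and d_t^c(C) ≤ m − ⌊(k−t)/n⌋. -/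
open Matrix

/-- A linear map into a space of dimension at most `dim C - t` vanishes on some `t`-dimensional
subspace of `C`. -/
theorem exists_submodule_le_ker_of_finrank {K V W : Type*} [Field K] [AddCommGroup V] [Module K V]
    [FiniteDimensional K V] [AddCommGroup W] [Module K W] [FiniteDimensional K W]
    (C : Submodule K V) (g : V →ₗ[K] W) {t : ℕ}
    (h : t + Module.finrank K W ≤ Module.finrank K C) :
    ∃ D : Submodule K V, D ≤ C ∧ Module.finrank K D = t ∧ D ≤ LinearMap.ker g := by
  have hrank := (g ∘ₗ C.subtype).finrank_range_add_finrank_ker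
  have hrange := Submodule.finrank_le (LinearMap.range (g ∘ₗ C.subtype))
  obtain ⟨v, hv⟩ := exists_linearIndependent_of_le_finrank
    (R := K) (M := LinearMap.ker (g ∘ₗ C.subtype)) (n := t) (by omega)
  have hv' : LinearIndependent K fun i => ((v i : C) : V) :=
    (hv.map' (Submodule.subtype _) (Submodule.ker_subtype _)).map' C.subtype C.ker_subtype
  refine ⟨Submodule.span K (Set.range fun i => ((v i : C) : V)), ?_, ?_, ?_⟩
  · rw [Submodule.span_le]
    rintro _ ⟨i, rfl⟩
    exact (v i : C).2
  · simpa using finrank_span_eq_card hv'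
  · rw [Submodule.span_le]
    rintro _ ⟨i, rfl⟩
    exact (v i).2

/-- The subspace of vectors of `K^b` whose first `s` coordinates vanish has dimension `b - s`. -/
theorem finrank_ker_funLeft_castLE (K : Type*) [Field K] {s b : ℕ} (h : s ≤ b) :
    Module.finrank K (LinearMap.ker (LinearMap.funLeft K K (Fin.castLE h))) = b - s := by
  have hrank := (LinearMap.funLeft K K (Fin.castLE h)).finrank_range_add_finrank_ker
  rw [LinearMap.range_eq_top.2
    (LinearMap.funLeft_surjective_of_injective K K _ (Fin.castLE_injective h)), finrank_top,
    Module.finrank_fin_fun, Module.finrank_fin_fun] at hrank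
  omega

theorem dRow_le_sub {K : Type*} [Field K] {a b s t : ℕ}
    (C : Submodule K (Matrix (Fin a) (Fin b) K)) (hs : s ≤ b)
    (h : t + a * s ≤ Module.finrank K C) : dRow C t ≤ b - s := by
  let g : Matrix (Fin a) (Fin b) K →ₗ[K] Matrix (Fin a) (Fin s) K :=
    { toFun := fun M => M.submatrix id (Fin.castLE hs)
      map_add' := fun _ _ => rfl
      map_smul' := fun _ _ => rfl }
  obtain ⟨D, hDC, hDt, hDg⟩ := exists_submodule_le_ker_of_finrank C g (t := t)
    (by simpa [Module.finrank_matrix] using h)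
  have hle : dRow C t ≤ Module.finrank K (rowSupport D) := Nat.sInf_le ⟨D, hDC, hDt, rfl⟩
  refine hle.trans ?_
  rw [← finrank_ker_funLeft_castLE K hs]
  refine Submodule.finrank_mono (iSup₂_le fun M hM => Submodule.span_le.2 ?_)
  rintro _ ⟨i, rfl⟩
  have hM0 : g M = 0 := hDg hM
  exact congrFun hM0 i

theorem dCol_le_sub {K : Type*} [Field K] {a b s t : ℕ}
    (C : Submodule K (Matrix (Fin a) (Fin b) K)) (hs : s ≤ a)
    (h : t + s * b ≤ Module.finrank K C) : dCol C t ≤ a - s := by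
  let g : Matrix (Fin a) (Fin b) K →ₗ[K] Matrix (Fin s) (Fin b) K :=
    { toFun := fun M => M.submatrix (Fin.castLE hs) id
      map_add' := fun _ _ => rfl
      map_smul' := fun _ _ => rfl }
  obtain ⟨D, hDC, hDt, hDg⟩ := exists_submodule_le_ker_of_finrank C g (t := t)
    (by simpa [Module.finrank_matrix] using h)
  have hle : dCol C t ≤ Module.finrank K (colSupport D) := Nat.sInf_le ⟨D, hDC, hDt, rfl⟩
  refine hle.trans ?_
  rw [← finrank_ker_funLeft_castLE K hs]
  refine Submodule.finrank_mono (iSup₂_le fun M hM => Submodule.span_le.2 ?_)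
  rintro _ ⟨j, rfl⟩
  have hM0 : g M = 0 := hDg hM
  exact funext fun i => congrFun (congrFun hM0 i) j

/-- Bounds on the generalized rank weights:
`d_t^r(C) ≤ n − ⌊(k−t)/m⌋` and `d_t^c(C) ≤ m − ⌊(k−t)/n⌋`. -/
theorem stmt7 {K : Type*} [Field K] {m n k : ℕ}
    (hm : 0 < m) (hn : 0 < n) (hk : 0 < k)
    (C : Submodule K (Matrix (Fin m) (Fin n) K))
    (hC : Module.finrank K C = k)
    (t : ℕ) (ht1 : 1 ≤ t) (htk : t ≤ k) :
    dRow C t ≤ n - (k - t) / m ∧ dCol C t ≤ m - (k - t) / n := by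
  have hkmn : k ≤ m * n := by
    simpa [hC, Module.finrank_matrix] using Submodule.finrank_le C
  constructor
  · refine dRow_le_sub C (Nat.div_le_of_le_mul (by omega)) ?_
    have := Nat.mul_div_le (k - t) m
    omega
  · refine dCol_le_sub C (Nat.div_le_of_le_mul (by rw [mul_comm]; omega)) ?_
    have := Nat.div_mul_le_self (k - t) n
    omega
end

section
/- Let F be a finite field with q elements and let C ⊆ F^{m×n} be any F-subspace with dim_F C = k. Then, as integers, q^m · Σ_{M ∈ C, M ≠ 0} (q^{n−rank(M)} − 1) ≥ (q^k − q^m)(q^n − 1) and q^n · Σ_{M ∈ C, M ≠ 0} (q^{m−rank(M)} − 1) ≥ (q^k − q^n)(q^m − 1). -/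
open Matrix

/-- A linear map between finite spaces has at least `|V| / |U|` kernel elements. -/
theorem card_le_card_mul_card_ker {F V U : Type*} [Field F] [AddCommGroup V] [Module F V]
    [AddCommGroup U] [Module F U] [Finite U] (f : V →ₗ[F] U) :
    Nat.card V ≤ Nat.card U * Nat.card (LinearMap.ker f) := by
  rw [Submodule.card_eq_card_quotient_mul_card (LinearMap.ker f), mul_comm]
  refine Nat.mul_le_mul_right _ ?_
  rw [Nat.card_congr f.quotKerEquivRange.toEquiv]
  exact Nat.card_le_card_of_injective _ Subtype.val_injective

/-- Double counting of the pairs `(x, w)` with `φ x w = 0`. -/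
theorem sum_card_ker_eq_sum_card_ker_flip {F V W U : Type*} [Field F]
    [AddCommGroup V] [Module F V] [Fintype V] [AddCommGroup W] [Module F W] [Fintype W]
    [AddCommGroup U] [Module F U] (φ : V →ₗ[F] W →ₗ[F] U) :
    ∑ x, Nat.card (LinearMap.ker (φ x)) = ∑ w, Nat.card (LinearMap.ker (φ.flip w)) := by
  classical
  have hV (x : V) : Nat.card (LinearMap.ker (φ x)) = ∑ w, if φ x w = 0 then 1 else 0 := by
    rw [Finset.sum_boole, Nat.cast_id, ← Fintype.card_subtype, ← Nat.card_eq_fintype_card]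
    rfl
  have hW (w : W) : Nat.card (LinearMap.ker (φ.flip w)) = ∑ x, if φ x w = 0 then 1 else 0 := by
    rw [Finset.sum_boole, Nat.cast_id, ← Fintype.card_subtype, ← Nat.card_eq_fintype_card]
    rfl
  simp only [hV, hW]
  exact Finset.sum_comm

theorem card_mul_sum_card_ker_ge {F V W U : Type*} [Field F]
    [AddCommGroup V] [Module F V] [Fintype V] [AddCommGroup W] [Module F W] [Fintype W]
    [AddCommGroup U] [Module F U] [Finite U] (φ : V →ₗ[F] W →ₗ[F] U) :
    ((Nat.card V : ℤ) - Nat.card U) * ((Nat.card W : ℤ) - 1) ≤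
      Nat.card U * (∑ x, ((Nat.card (LinearMap.ker (φ x)) : ℤ) - 1) - (Nat.card W - 1)) := by
  classical
  have hcount : (∑ x, (Nat.card (LinearMap.ker (φ x)) : ℤ)) =
      ∑ w, (Nat.card (LinearMap.ker (φ.flip w)) : ℤ) := by
    exact_mod_cast sum_card_ker_eq_sum_card_ker_flip φ
  have hzero : (Nat.card (LinearMap.ker (φ.flip 0)) : ℤ) = Nat.card V := by
    rw [map_zero, LinearMap.ker_zero, Nat.card_congr Submodule.topEquiv.toEquiv]
  have hbound : ((Nat.card W : ℤ) - 1) * Nat.card V ≤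
      ∑ w ∈ Finset.univ.erase (0 : W),
        (Nat.card U : ℤ) * Nat.card (LinearMap.ker (φ.flip w)) := by
    have h := Finset.card_nsmul_le_sum (Finset.univ.erase (0 : W))
      (fun w => (Nat.card U : ℤ) * Nat.card (LinearMap.ker (φ.flip w))) (Nat.card V : ℤ)
      fun w _ => by exact_mod_cast card_le_card_mul_card_ker (φ.flip w)
    rwa [Finset.card_erase_of_mem (Finset.mem_univ _), Finset.card_univ, nsmul_eq_mul,
      Nat.cast_sub Fintype.card_pos, Nat.cast_one, ← Nat.card_eq_fintype_card] at h
  rw [← Finset.mul_sum] at hbound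
  rw [Finset.sum_sub_distrib, hcount, ← Finset.add_sum_erase _ _ (Finset.mem_univ (0 : W)), hzero,
    Finset.sum_const, Finset.card_univ, ← Nat.card_eq_fintype_card, nsmul_eq_mul]
  linarith

theorem card_ker_mulVecLin {F : Type*} [Field F] [Fintype F] {a b : ℕ}
    (M : Matrix (Fin a) (Fin b) F) :
    Nat.card (LinearMap.ker M.mulVecLin) = Fintype.card F ^ (b - M.rank) := by
  have h := M.mulVecLin.finrank_range_add_finrank_ker
  rw [Module.finrank_fin_fun] at h
  rw [Module.natCard_eq_pow_finrank (K := F), Nat.card_eq_fintype_card, Matrix.rank]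
  congr 1
  omega

/-- The inequality for a linear family of matrices, not necessarily injective. -/
theorem card_pow_mul_sum_rank_ge {F V : Type*} [Field F] [Fintype F] [AddCommGroup V] [Module F V]
    [Fintype V] {a b : ℕ} (φ : V →ₗ[F] Matrix (Fin a) (Fin b) F) :
    ((Fintype.card F : ℤ) ^ Module.finrank F V - (Fintype.card F : ℤ) ^ a) *
        ((Fintype.card F : ℤ) ^ b - 1) ≤
      (Fintype.card F : ℤ) ^ a * (∑ x, ((Fintype.card F : ℤ) ^ (b - (φ x).rank) - 1) -
        ((Fintype.card F : ℤ) ^ b - 1)) := by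
  have h := card_mul_sum_card_ker_ge
    ((Matrix.toLin' (R := F) (m := Fin a) (n := Fin b)).toLinearMap ∘ₗ φ)
  have hker (x : V) : Nat.card (LinearMap.ker
      (((Matrix.toLin' (R := F) (m := Fin a) (n := Fin b)).toLinearMap ∘ₗ φ) x)) =
      Fintype.card F ^ (b - (φ x).rank) := card_ker_mulVecLin (φ x)
  simp only [hker] at h
  rw [Module.natCard_eq_pow_finrank (K := F) (V := V)] at h
  simpa using h

theorem finsum_mem_sdiff_zero {R M A : Type*} [Ring R] [AddCommGroup M] [Module R M]
    [AddCommGroup A] (C : Submodule R M) [Fintype C] (f : M → A) :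
    ∑ᶠ x ∈ (C : Set M) \ {0}, f x = ∑ x : C, f x - f 0 := by
  have hfin : ((C : Set M) \ {0}).Finite := (Set.toFinite (C : Set M)).subset Set.sdiff_subset
  have h := finsum_mem_insert f (a := 0) (fun h => h.2 rfl) hfin
  rw [Set.insert_sdiff_singleton, Set.insert_eq_of_mem C.zero_mem] at h
  rw [← finsum_eq_sum_of_fintype, eq_sub_iff_add_eq', ← h]
  exact (finsum_set_coe_eq_finsum_mem (C : Set M)).symm

/-- For any `[m×n,k]_q` code `C`,
`q^m · Σ_{M ∈ C, M≠0} (q^{n−rk(M)} − 1) ≥ (q^k − q^m)(q^n − 1)` and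
`q^n · Σ_{M ∈ C, M≠0} (q^{m−rk(M)} − 1) ≥ (q^k − q^n)(q^m − 1)`, as integers. -/
theorem stmt9 {F : Type*} [Field F] [Fintype F] {m n k : ℕ}
    (hm : 0 < m) (hn : 0 < n) (hk : 0 < k)
    (q : ℕ) (hq : q = Fintype.card F)
    (C : Submodule F (Matrix (Fin m) (Fin n) F))
    (hC : Module.finrank F C = k) :
    (q : ℤ) ^ m * ∑ᶠ M ∈ (C : Set (Matrix (Fin m) (Fin n) F)) \ {0},
        ((q : ℤ) ^ (n - M.rank) - 1)
      ≥ ((q : ℤ) ^ k - (q : ℤ) ^ m) * ((q : ℤ) ^ n - 1) ∧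
    (q : ℤ) ^ n * ∑ᶠ M ∈ (C : Set (Matrix (Fin m) (Fin n) F)) \ {0},
        ((q : ℤ) ^ (m - M.rank) - 1)
      ≥ ((q : ℤ) ^ k - (q : ℤ) ^ n) * ((q : ℤ) ^ m - 1) := by
  subst hq hC
  have : Fintype C := Fintype.ofFinite C
  rw [finsum_mem_sdiff_zero, finsum_mem_sdiff_zero]
  constructor
  · simpa using card_pow_mul_sum_rank_ge C.subtype
  · simpa using card_pow_mul_sum_rank_ge
      ((Matrix.transposeLinearEquiv (Fin m) (Fin n) F F).toLinearMap ∘ₗ C.subtype)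
end

section
/- Let F be a finite field with q elements and let B₁,…,B_k ∈ F^{m×n} be a linearly independent family of matrices generating a column-nondegenerate matrix rank-metric code C = span_F{B₁,…,B_k}, with associated column-system S. Then every nonzero X ∈ S has rank(X) = m (i.e., C is column-faithful) if and only if, as integers, q^m · Σ_{M ∈ C, M ≠ 0} q^{n−rank(M)} = (q^k − q^m)(q^n − 1) + q^m(q^k − 1). -/
open Matrix

theorem natCard_mulVec_eq_zero {F : Type*} [Field F] [Fintype F] {a b : ℕ}
    (M : Matrix (Fin a) (Fin b) F) :
    Nat.card {v : Fin b → F // M *ᵥ v = 0} = Fintype.card F ^ (b - M.rank) := by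
  have hker : Nat.card {v : Fin b → F // M *ᵥ v = 0} = Nat.card (LinearMap.ker M.mulVecLin) :=
    Nat.card_congr (Equiv.subtypeEquivRight fun v => by simp)
  have hdim := LinearMap.finrank_range_add_finrank_ker M.mulVecLin
  rw [Module.finrank_fin_fun] at hdim
  rw [hker, Module.natCard_eq_pow_finrank (K := F), Nat.card_eq_fintype_card, Matrix.rank]
  congr 1
  omega

theorem natCard_vecMul_eq_zero {F : Type*} [Field F] [Fintype F] {a b : ℕ}
    (X : Matrix (Fin a) (Fin b) F) :
    Nat.card {u : Fin a → F // u ᵥ* X = 0} = Fintype.card F ^ (a - X.rank) := by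
  rw [← Matrix.rank_transpose X, ← natCard_mulVec_eq_zero]
  exact Nat.card_congr (Equiv.subtypeEquivRight fun u => by rw [mulVec_transpose])

/-- The linear combination of the column slices with coefficients `v`. -/
noncomputable def sliceComb {F : Type*} [Field F] {m n k : ℕ}
    (B : Fin k → Matrix (Fin m) (Fin n) F) (v : Fin n → F) : Matrix (Fin k) (Fin m) F :=
  ∑ l, v l • colSlices B l

theorem combMap_mulVec {F : Type*} [Field F] {m n k : ℕ}
    (B : Fin k → Matrix (Fin m) (Fin n) F) (u : Fin k → F) (v : Fin n → F) :
    combMap B u *ᵥ v = u ᵥ* sliceComb B v := by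
  ext j
  simp only [combMap, sliceComb, colSlices, LinearMap.coe_mk, AddHom.coe_mk, mulVec, vecMul,
    dotProduct, Matrix.sum_apply, Matrix.smul_apply, Matrix.of_apply, smul_eq_mul,
    Finset.sum_mul, Finset.mul_sum]
  rw [Finset.sum_comm]
  exact Finset.sum_congr rfl fun i _ => Finset.sum_congr rfl fun l _ => by ring

/-- Double counting of the pairs `(u, v)` with `(∑ i, u i • B i) v = 0`. -/
theorem sum_card_pow_combMap_eq {F : Type*} [Field F] [Fintype F] {m n k : ℕ}
    (B : Fin k → Matrix (Fin m) (Fin n) F) :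
    ∑ u : Fin k → F, Fintype.card F ^ (n - (combMap B u).rank)
      = ∑ v : Fin n → F, Fintype.card F ^ (k - (sliceComb B v).rank) := by
  simp_rw [← natCard_mulVec_eq_zero, ← natCard_vecMul_eq_zero, combMap_mulVec]
  rw [← Nat.card_sigma, ← Nat.card_sigma]
  exact Nat.card_congr
    { toFun := fun p => ⟨p.2.1, p.1, p.2.2⟩
      invFun := fun p => ⟨p.2.1, p.1, p.2.2⟩
      left_inv := fun _ => rfl
      right_inv := fun _ => rfl }

theorem sliceComb_ne_zero {F : Type*} [Field F] {m n k : ℕ}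
    {B : Fin k → Matrix (Fin m) (Fin n) F}
    (hnd : rowSupport (Submodule.span F (Set.range B)) = ⊤) {v : Fin n → F} (hv : v ≠ 0) :
    sliceComb B v ≠ 0 := by
  intro h0
  apply hv
  have hle : rowSupport (Submodule.span F (Set.range B)) ≤ perp v := by
    refine iSup₂_le fun M hM => Submodule.span_le.2 ?_
    rintro _ ⟨j, rfl⟩
    obtain ⟨u, rfl⟩ := (Submodule.mem_span_range_iff_exists_fun F).1 hM
    have hj := congrFun (combMap_mulVec B u v) j
    rw [h0, vecMul_zero] at hj
    refine Eq.trans (Finset.sum_congr rfl fun l _ => mul_comm _ _) hj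
  rw [hnd, top_le_iff] at hle
  ext l
  have hl : Pi.single l 1 ∈ perp v := hle ▸ Submodule.mem_top
  have hsum : ∑ i, v i * (Pi.single l 1 : Fin n → F) i = 0 := hl
  simpa [Pi.single_apply] using hsum

theorem finsum_span_diff_zero {F : Type*} [Field F] [Fintype F] {m n k : ℕ}
    {B : Fin k → Matrix (Fin m) (Fin n) F} (hB : LinearIndependent F B)
    (f : Matrix (Fin m) (Fin n) F → ℤ) :
    ∑ᶠ M ∈ (Submodule.span F (Set.range B) : Set (Matrix (Fin m) (Fin n) F)) \ {0}, f M
      = ∑ u : Fin k → F, f (combMap B u) - f 0 := by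
  classical
  have hinj : Function.Injective (combMap B) :=
    LinearMap.ker_eq_bot.1 (LinearMap.ker_eq_bot'.2 fun u hu =>
      funext (Fintype.linearIndependent_iff.1 hB u hu))
  have himage : (Submodule.span F (Set.range B) : Set (Matrix (Fin m) (Fin n) F)) \ {0}
      = combMap B '' ((Finset.univ.erase 0 : Finset (Fin k → F)) : Set (Fin k → F)) := by
    ext M
    simp only [Set.mem_sdiff, SetLike.mem_coe, Submodule.mem_span_range_iff_exists_fun,
      Set.mem_singleton_iff, Set.mem_image, Finset.mem_erase, Finset.mem_univ, and_true]
    constructor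
    · rintro ⟨⟨u, rfl⟩, hu⟩
      exact ⟨u, fun h => hu (by simp [h]), rfl⟩
    · rintro ⟨u, hu, rfl⟩
      exact ⟨⟨u, rfl⟩, fun h => hu (hinj (h.trans (map_zero _).symm))⟩
  rw [himage, finsum_mem_image hinj.injOn, finsum_mem_coe_finset,
    Finset.sum_erase_eq_sub (Finset.mem_univ _), map_zero]

/-- A column-nondegenerate code `C` with associated column-system `S` is
column-faithful (every nonzero `X ∈ S` has rank `m`) iff
`q^m · Σ_{M ∈ C, M≠0} q^{n−rk(M)} = (q^k − q^m)(q^n − 1) + q^m(q^k − 1)`. -/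
theorem stmt10 {F : Type*} [Field F] [Fintype F] {m n k : ℕ}
    (hm : 0 < m) (hn : 0 < n) (hk : 0 < k)
    (q : ℕ) (hq : q = Fintype.card F)
    (B : Fin k → Matrix (Fin m) (Fin n) F) (hB : LinearIndependent F B)
    (C : Submodule F (Matrix (Fin m) (Fin n) F))
    (hC : C = Submodule.span F (Set.range B))
    (hnd : rowSupport C = ⊤)
    (S : Submodule F (Matrix (Fin k) (Fin m) F))
    (hS : S = Submodule.span F (Set.range (colSlices B))) :
    (∀ X ∈ S, X ≠ 0 → X.rank = m) ↔
      (q : ℤ) ^ m * ∑ᶠ M ∈ (C : Set (Matrix (Fin m) (Fin n) F)) \ {0},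
          (q : ℤ) ^ (n - M.rank)
        = ((q : ℤ) ^ k - (q : ℤ) ^ m) * ((q : ℤ) ^ n - 1)
            + (q : ℤ) ^ m * ((q : ℤ) ^ k - 1) := by
  classical
  subst hC hS hq
  set q : ℤ := (Fintype.card F : ℤ) with hqdef
  have hq1 : 1 < q := Nat.one_lt_cast.2 Fintype.one_lt_card
  have hcount : ∑ u : Fin k → F, q ^ (n - (combMap B u).rank)
      = ∑ v : Fin n → F, q ^ (k - (sliceComb B v).rank) := by
    rw [hqdef]
    exact_mod_cast sum_card_pow_combMap_eq B
  have hzero : sliceComb B 0 = 0 := by simp [sliceComb]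
  have hsplit := Finset.add_sum_erase Finset.univ
    (fun v : Fin n → F => q ^ (k - (sliceComb B v).rank)) (Finset.mem_univ 0)
  simp only [hzero, rank_zero, Nat.sub_zero] at hsplit
  have hterm (v : Fin n → F) : q ^ k ≤ q ^ m * q ^ (k - (sliceComb B v).rank) ∧
      (q ^ k = q ^ m * q ^ (k - (sliceComb B v).rank) ↔ (sliceComb B v).rank = m) := by
    have hm' := (sliceComb B v).rank_le_width
    have hk' := (sliceComb B v).rank_le_height
    rw [← pow_add]
    refine ⟨pow_le_pow_right₀ hq1.le (by omega), ?_⟩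
    rw [(pow_right_injective₀ (by omega) hq1.ne').eq_iff]
    omega
  have hcard : ((Finset.univ.erase (0 : Fin n → F)).card : ℤ) = q ^ n - 1 := by
    rw [Finset.card_erase_of_mem (Finset.mem_univ _), Nat.cast_sub]
    · simp [hqdef]
    · exact Finset.card_pos.2 ⟨0, Finset.mem_univ _⟩
  have hfaithful : (∀ X ∈ Submodule.span F (Set.range (colSlices B)), X ≠ 0 → X.rank = m) ↔
      ∀ v ∈ Finset.univ.erase (0 : Fin n → F),
        q ^ k = q ^ m * q ^ (k - (sliceComb B v).rank) := by
    simp only [fun v => (hterm v).2, Finset.mem_erase, Finset.mem_univ, and_true,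
      Submodule.mem_span_range_iff_exists_fun]
    constructor
    · exact fun h v hv => h _ ⟨v, rfl⟩ (sliceComb_ne_zero hnd hv)
    · rintro h _ ⟨v, rfl⟩ hX
      exact h v fun hv => hX (by simp [hv])
  rw [hfaithful, ← Finset.sum_eq_sum_iff_of_le fun v _ => (hterm v).1, Finset.sum_const,
    nsmul_eq_mul, hcard, ← Finset.mul_sum, finsum_span_diff_zero hB, hcount, ← hsplit, rank_zero,
    Nat.sub_zero]
  constructor <;> intro h <;> linear_combination -h
end

section
/- Let F be a finite field and let B₁,…,B_k ∈ F^{m×n} be a linearly independent family of matrices generating a matrix rank-metric code C = span_F{B₁,…,B_k} that is both column-nondegenerate and row-nondegenerate, with associated column-system S and row-system T. Then every nonzero X ∈ S has rank(X) = m (column-faithfulness) if and only if every nonzero Y ∈ T has rank(Y) = n (row-faithfulness). -/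
open Matrix

/-- A matrix over a field has full column rank iff its kernel is trivial. -/
theorem rank_eq_width_iff {F : Type*} [Field F] {a b : ℕ} (X : Matrix (Fin a) (Fin b) F) :
    X.rank = b ↔ ∀ w, X *ᵥ w = 0 → w = 0 := by
  have h := X.mulVecLin.finrank_range_add_finrank_ker
  rw [Module.finrank_fin_fun] at h
  have hker : (∀ w, X *ᵥ w = 0 → w = 0) ↔ Module.finrank F (LinearMap.ker X.mulVecLin) = 0 := by
    rw [Submodule.finrank_eq_zero, LinearMap.ker_eq_bot']
    rfl
  rw [hker, Matrix.rank]
  omega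

/-- If every generator kills `v` on the right, the row support lies in `perp v`. -/
theorem rowSupport_span_le_perp {F : Type*} [Field F] {m n k : ℕ}
    (B : Fin k → Matrix (Fin m) (Fin n) F) (v : Fin n → F) (hv : ∀ i, B i *ᵥ v = 0) :
    rowSupport (Submodule.span F (Set.range B)) ≤ perp v := by
  refine iSup₂_le fun M hM => ?_
  have hMv : M *ᵥ v = 0 := by
    induction hM using Submodule.span_induction with
    | mem x hx => obtain ⟨i, rfl⟩ := hx; exact hv i
    | zero => exact Matrix.zero_mulVec v
    | add x y _ _ hx hy => rw [Matrix.add_mulVec, hx, hy, add_zero]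
    | smul c x _ hx => rw [Matrix.smul_mulVec, hx, smul_zero]
  rw [rowSpace, Submodule.span_le]
  rintro _ ⟨j, rfl⟩
  exact (dotProduct_comm v (M j)).trans (congrFun hMv j)

/-- If every generator kills `w` on the left, the column support lies in `perp w`. -/
theorem colSupport_span_le_perp {F : Type*} [Field F] {m n k : ℕ}
    (B : Fin k → Matrix (Fin m) (Fin n) F) (w : Fin m → F) (hw : ∀ i, w ᵥ* B i = 0) :
    colSupport (Submodule.span F (Set.range B)) ≤ perp w := by
  refine iSup₂_le fun M hM => ?_
  have hMw : w ᵥ* M = 0 := by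
    induction hM using Submodule.span_induction with
    | mem x hx => obtain ⟨i, rfl⟩ := hx; exact hw i
    | zero => exact Matrix.vecMul_zero w
    | add x y _ _ hx hy => rw [Matrix.vecMul_add, hx, hy, add_zero]
    | smul c x _ hx => rw [Matrix.vecMul_smul, hx, smul_zero]
  rw [colSpace, Submodule.span_le]
  rintro _ ⟨j, rfl⟩
  exact congrFun hMw j

theorem eq_zero_of_top_le_perp {F : Type*} [Field F] {a : ℕ} (v : Fin a → F)
    (h : ⊤ ≤ perp v) : v = 0 := by
  ext l
  have hl : v ⬝ᵥ Pi.single l 1 = 0 := h (Submodule.mem_top (x := Pi.single l 1))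
  simpa using hl

theorem sum_smul_colSlices {F : Type*} [Field F] {m n k : ℕ}
    (B : Fin k → Matrix (Fin m) (Fin n) F) (v : Fin n → F) :
    ∑ l, v l • colSlices B l = Matrix.of fun i => B i *ᵥ v := by
  ext i j
  simp [Matrix.sum_apply, colSlices, Matrix.mulVec, dotProduct, mul_comm]

theorem transpose_sum_smul_rowSlices {F : Type*} [Field F] {m n k : ℕ}
    (B : Fin k → Matrix (Fin m) (Fin n) F) (w : Fin m → F) :
    (∑ j, w j • rowSlices B j)ᵀ = Matrix.of fun i => w ᵥ* B i := by
  ext i l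
  simp [Matrix.sum_apply, rowSlices, Matrix.vecMul, dotProduct]

/-- Column-faithfulness says that no pair of nonzero vectors annihilates all the bilinear forms
given by the generators. -/
theorem colFaithful_iff {F : Type*} [Field F] {m n k : ℕ}
    (B : Fin k → Matrix (Fin m) (Fin n) F)
    (hnd : rowSupport (Submodule.span F (Set.range B)) = ⊤) :
    (∀ X ∈ Submodule.span F (Set.range (colSlices B)), X ≠ 0 → X.rank = m) ↔
      ∀ (v : Fin n → F) (w : Fin m → F), (∀ i, w ⬝ᵥ B i *ᵥ v = 0) → v = 0 ∨ w = 0 := by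
  simp only [Submodule.mem_span_range_iff_exists_fun, forall_exists_index,
    forall_apply_eq_imp_iff, sum_smul_colSlices, rank_eq_width_iff]
  refine forall_congr' fun v => ?_
  have hzero : (Matrix.of fun i => B i *ᵥ v) = 0 ↔ v = 0 := by
    refine ⟨fun h => eq_zero_of_top_le_perp v ?_, fun h => ?_⟩
    · exact hnd ▸ rowSupport_span_le_perp B v fun i => congrFun h i
    · ext i j
      simp [h]
  rw [Ne, hzero, ← or_iff_not_imp_left, ← forall_or_left]
  refine forall_congr' fun w => ?_
  have hker : (Matrix.of fun i => B i *ᵥ v) *ᵥ w = 0 ↔ ∀ i, w ⬝ᵥ B i *ᵥ v = 0 := by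
    simp only [funext_iff, dotProduct_comm w]
    rfl
  rw [hker]
  tauto

/-- Row-faithfulness says that no pair of nonzero vectors annihilates all the bilinear forms
given by the generators. -/
theorem rowFaithful_iff {F : Type*} [Field F] {m n k : ℕ}
    (B : Fin k → Matrix (Fin m) (Fin n) F)
    (hnd : colSupport (Submodule.span F (Set.range B)) = ⊤) :
    (∀ Y ∈ Submodule.span F (Set.range (rowSlices B)), Y ≠ 0 → Y.rank = n) ↔
      ∀ (w : Fin m → F) (v : Fin n → F), (∀ i, w ⬝ᵥ B i *ᵥ v = 0) → w = 0 ∨ v = 0 := by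
  simp only [Submodule.mem_span_range_iff_exists_fun, forall_exists_index,
    forall_apply_eq_imp_iff]
  refine forall_congr' fun w => ?_
  rw [← Matrix.rank_transpose, Ne, ← Matrix.transpose_eq_zero, transpose_sum_smul_rowSlices,
    rank_eq_width_iff]
  have hzero : (Matrix.of fun i => w ᵥ* B i) = 0 ↔ w = 0 := by
    refine ⟨fun h => eq_zero_of_top_le_perp w ?_, fun h => ?_⟩
    · exact hnd ▸ colSupport_span_le_perp B w fun i => congrFun h i
    · ext i j
      simp [h]
  rw [hzero, ← or_iff_not_imp_left, ← forall_or_left]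
  refine forall_congr' fun v => ?_
  have hker : (Matrix.of fun i => w ᵥ* B i) *ᵥ v = 0 ↔ ∀ i, w ⬝ᵥ B i *ᵥ v = 0 := by
    simp only [funext_iff, Matrix.dotProduct_mulVec]
    rfl
  rw [hker]
  tauto

/-- For a column- and row-nondegenerate code `C` with associated
column-system `S` and row-system `T`, column-faithfulness (every nonzero `X ∈ S` has
rank `m`) is equivalent to row-faithfulness (every nonzero `Y ∈ T` has rank `n`). -/
theorem stmt11 {F : Type*} [Field F] [Fintype F] {m n k : ℕ}
    (hm : 0 < m) (hn : 0 < n) (hk : 0 < k)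
    (B : Fin k → Matrix (Fin m) (Fin n) F) (hB : LinearIndependent F B)
    (C : Submodule F (Matrix (Fin m) (Fin n) F))
    (hC : C = Submodule.span F (Set.range B))
    (hcolnd : rowSupport C = ⊤) (hrownd : colSupport C = ⊤)
    (S : Submodule F (Matrix (Fin k) (Fin m) F))
    (hS : S = Submodule.span F (Set.range (colSlices B)))
    (T : Submodule F (Matrix (Fin n) (Fin k) F))
    (hT : T = Submodule.span F (Set.range (rowSlices B))) :
    (∀ X ∈ S, X ≠ 0 → X.rank = m) ↔ (∀ Y ∈ T, Y ≠ 0 → Y.rank = n) := by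
  subst hC hS hT
  rw [colFaithful_iff B hcolnd, rowFaithful_iff B hrownd, forall_comm]
  simp only [or_comm]
end
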